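/- There exists a constant C > 0, depending only on d and α, such that for every 0 < r ≤ 1/4, with z_r := (0, …, 0, 1 + r/2) ∈ ℝ^d, one has ∫_{{y : |y − z_r| < 1 and |y| < 7r/8}} |y|^{α−d} dy ≥ C r^α. -/

import Mathlib

open MeasureTheory

/-- there is `C = C(d,α) > 0` such that for every `0 < r ≤ 1/4`,
with `z_r = (0,…,0,1+r/2)`,
`∫_{ {|y - z_r| < 1} ∩ {|y| < 7r/8} } |y|^{α-d} dy ≥ C r^α`. -/
theorem statement14 (d : ℕ) (hd : 2 ≤ d) (α : ℝ) (hα : 0 < α) (hα2 : α < 2) :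
    ∃ C : ℝ, 0 < C ∧
      ∀ r : ℝ, 0 < r → r ≤ 1 / 4 →
        ENNReal.ofReal (C * r ^ α) ≤
          ∫⁻ y in {y : EuclideanSpace ℝ (Fin d) |
              ‖y - EuclideanSpace.single (⟨d - 1, by omega⟩ : Fin d) (1 + r / 2)‖ < 1 ∧
              ‖y‖ < 7 * r / 8},
            ENNReal.ofReal (‖y‖ ^ (α - (d : ℝ))) := by
  have hb0 : 0 < volume (Metric.ball (0 : EuclideanSpace ℝ (Fin d)) 1) :=
    Metric.measure_ball_pos _ _ one_pos
  have hbt : volume (Metric.ball (0 : EuclideanSpace ℝ (Fin d)) 1) ≠ ⊤ :=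
    measure_ball_lt_top.ne
  set V := volume (Metric.ball (0 : EuclideanSpace ℝ (Fin d)) 1) with hV
  have hVpos : 0 < V.toReal := ENNReal.toReal_pos hb0.ne' hbt
  refine ⟨(1 / 8) ^ d * V.toReal, by positivity, ?_⟩
  intro r hr hr4
  set i : Fin d := ⟨d - 1, by omega⟩ with hi
  set c : EuclideanSpace ℝ (Fin d) := EuclideanSpace.single i (3 * r / 4) with hc
  have hcn : ‖c‖ = 3 * r / 4 := by
    rw [hc, EuclideanSpace.norm_single, Real.norm_eq_abs, abs_of_pos (by positivity)]
  have hcz : ‖c - EuclideanSpace.single i (1 + r / 2)‖ = 1 - r / 4 := by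
    have : c - EuclideanSpace.single i (1 + r / 2)
        = EuclideanSpace.single i (3 * r / 4 - (1 + r / 2)) := by
      ext j
      by_cases h : j = i <;> simp [hc, h]
    rw [this, EuclideanSpace.norm_single, Real.norm_eq_abs, abs_of_neg (by linarith)]
    ring
  have hsub : Metric.ball c (r / 8) ⊆ {y : EuclideanSpace ℝ (Fin d) |
      ‖y - EuclideanSpace.single i (1 + r / 2)‖ < 1 ∧ ‖y‖ < 7 * r / 8} := by
    intro y hy
    rw [Metric.mem_ball, dist_eq_norm] at hy
    have h1 := norm_sub_le_norm_sub_add_norm_sub y c (EuclideanSpace.single i (1 + r / 2))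
    have h2 := norm_le_norm_add_norm_sub' y c
    constructor <;> linarith
  have hd' : (2 : ℝ) ≤ d := by exact_mod_cast hd
  calc ENNReal.ofReal ((1 / 8) ^ d * V.toReal * r ^ α)
      = ENNReal.ofReal (r ^ (α - (d : ℝ))) * volume (Metric.ball c (r / 8)) := by
        rw [Measure.addHaar_ball_of_pos _ _ (by positivity : 0 < r / 8), ← hV, finrank_euclideanSpace_fin]
        rw [show (1 / 8) ^ d * V.toReal * r ^ α
          = r ^ (α - (d : ℝ)) * ((r / 8) ^ d * V.toReal) by
            rw [Real.rpow_sub hr, Real.rpow_natCast, div_pow, div_pow, one_pow]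
            field_simp]
        rw [ENNReal.ofReal_mul (by positivity), ENNReal.ofReal_mul (by positivity),
          ENNReal.ofReal_toReal hbt]
    _ = ∫⁻ y in Metric.ball c (r / 8), ENNReal.ofReal (r ^ (α - (d : ℝ))) := by
        rw [setLIntegral_const]
    _ ≤ ∫⁻ y in Metric.ball c (r / 8), ENNReal.ofReal (‖y‖ ^ (α - (d : ℝ))) := by
        refine setLIntegral_mono' Metric.isOpen_ball.measurableSet ?_
        intro y hy
        have h7 := (hsub hy).2
        rw [Metric.mem_ball, dist_eq_norm] at hy
        have h2 := norm_le_norm_add_norm_sub c y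
        rw [norm_sub_rev] at hy
        have h3 := norm_sub_norm_le c y
        exact ENNReal.ofReal_le_ofReal
          (Real.rpow_le_rpow_of_nonpos (by linarith) (by linarith) (by linarith))
    _ ≤ _ := lintegral_mono_set hsub
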